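/- There is a constant c depending only on ε, θ, γ₁, γ₂, γ₃, γ₄ (polynomial in 1/ε) such that for all sufficiently large n and every sorted state s, the (1+β)-choice-type multidimensional process satisfies the supermartingale inequality ∑_{j=1}^n p_j Γ(sort(r^(j))) ≤ (1 − ε²(1 − 2γ₁)/(4 n (1 + εγ₁))) · Γ(s) + c. -/

import Mathlib

open Real Finset

/-- Nonincreasing rearrangement of a tuple of reals. -/
noncomputable def sortDesc {n : ℕ} (r : Fin n → ℝ) : Fin n → ℝ :=
  fun i => r (Tuple.sort r i.rev)

/-- State update when a ball of total load `f` lands in bin `j`. -/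
noncomputable def upd (n f : ℕ) (s : Fin n → ℝ) (j : Fin n) : Fin n → ℝ :=
  fun i => if i = j then s i + (f : ℝ) * (1 - 1 / n) else s i - (f : ℝ) / n

/-- Potential Φ(s) = ∑_{i=1}^n e^{α s_i}. -/
noncomputable def PhiB (n : ℕ) (α : ℝ) (s : Fin n → ℝ) : ℝ :=
  ∑ i : Fin n, Real.exp (α * s i)

/-- Potential Ψ(s) = ∑_{i=1}^n e^{-α s_i}. -/
noncomputable def PsiB (n : ℕ) (α : ℝ) (s : Fin n → ℝ) : ℝ :=
  ∑ i : Fin n, Real.exp (-α * s i)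

/-- Potential Γ(s) = Φ(s) + Ψ(s). -/
noncomputable def GammaB (n : ℕ) (α : ℝ) (s : Fin n → ℝ) : ℝ :=
  PhiB n α s + PsiB n α s


/-!
Fix `β = ± α` and write `b = β f`, so that `b = ± ε / 2`. Averaging over the bin hit by the ball
multiplies the `i`-th term of `Φ_β(s) = ∑ i, exp (β s i)` by
`exp (- b / n) (1 + p i (exp b - 1))`. If `p i` were `(1 - 2 b) / n` this factor would be at most
`1 - (11 / 10) b ^ 2 / n`, so only the correlation of the deviations `p i - (1 - 2 b) / n` with
`exp (β s i)` has to be controlled. On the set `S` of the about `(1 - γ₁) n` indices with the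
largest `β s i`, these deviations have the favourable sign on average, and by Chebyshev's sum
inequality they contribute nothing. Off `S` the contribution is at most `exp D`, where `D` is the
largest value of `β s i` off `S`. If `D > 0`, the fact that `∑ i, s i = 0` forces the average of
`- β s i` off `S` to be at least `D / (2 γ₁)`, and `1 / (2 γ₁) > 1`; by Jensen's inequality
`exp D` is then an arbitrarily small multiple of `Φ_{-β}(s) / n` plus a constant. Adding the bounds
for `β = α` and `β = - α` gives the drift of `Γ`.
-/

section FiniteSums

variable {ι : Type*}

lemma card_mul_exp_le_sum_exp {S : Finset ι} {g : ι → ℝ} {t : ℝ}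
    (h : t * #S ≤ ∑ i ∈ S, g i) : #S * exp t ≤ ∑ i ∈ S, exp (g i) := by
  have tangent (x : ℝ) : exp t * (1 + x - t) ≤ exp x :=
    calc exp t * (1 + x - t) ≤ exp t * exp (x - t) := by
          gcongr
          linarith [add_one_le_exp (x - t)]
      _ = exp x := by rw [← exp_add, add_sub_cancel]
  calc #S * exp t ≤ exp t * (#S + ∑ i ∈ S, g i - t * #S) := by
        rw [mul_comm]
        gcongr
        linarith
    _ = ∑ i ∈ S, exp t * (1 + g i - t) := by
        simp only [← mul_sum, sum_sub_distrib, sum_add_distrib, sum_const, nsmul_eq_mul]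
        ring
    _ ≤ ∑ i ∈ S, exp (g i) := sum_le_sum fun i _ => tangent (g i)

lemma sum_mul_nonpos_of_antivaryOn {S : Finset ι} {w x : ι → ℝ} (hwx : AntivaryOn w x S)
    (hw : ∑ i ∈ S, w i ≤ 0) (hx : ∀ i ∈ S, 0 ≤ x i) : ∑ i ∈ S, w i * x i ≤ 0 := by
  rcases S.eq_empty_or_nonempty with rfl | hS
  · simp
  · have chebyshev : #S * ∑ i ∈ S, w i * x i ≤ 0 :=
      hwx.card_mul_sum_le_sum_mul_sum.trans (mul_nonpos_of_nonpos_of_nonneg hw (sum_nonneg hx))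
    exact nonpos_of_mul_nonpos_right chebyshev (by exact_mod_cast hS.card_pos)

variable [Fintype ι] {S : Finset ι}

lemma sum_mul_exp_le_sum_abs_mul_exp {w y : ι → ℝ} {D : ℝ} (hwy : Antivary w y)
    (hw : ∑ i ∈ S, w i ≤ 0) (hD : ∀ i ∉ S, y i ≤ D) :
    ∑ i, w i * exp (y i) ≤ (∑ i, |w i|) * exp D := by
  classical
  have hwx : Antivary w fun i => exp (y i) := fun _ _ hij => hwy (exp_lt_exp.1 hij)
  have inside : ∑ i ∈ S, w i * exp (y i) ≤ 0 :=
    sum_mul_nonpos_of_antivaryOn (hwx.antivaryOn S) hw fun _ _ => (exp_pos _).le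
  have outside : ∑ i ∈ Sᶜ, w i * exp (y i) ≤ ∑ i ∈ Sᶜ, |w i| * exp D :=
    sum_le_sum fun i hi => by
      gcongr
      · exact le_abs_self _
      · exact hD i (mem_compl.1 hi)
  calc ∑ i, w i * exp (y i) = ∑ i ∈ S, w i * exp (y i) + ∑ i ∈ Sᶜ, w i * exp (y i) :=
        (sum_add_sum_compl S _).symm
    _ ≤ ∑ i ∈ Sᶜ, |w i| * exp D := by linarith
    _ ≤ ∑ i, |w i| * exp D :=
        sum_le_sum_of_subset_of_nonneg (subset_univ _) fun _ _ _ => by positivity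
    _ = (∑ i, |w i|) * exp D := (sum_mul ..).symm

lemma exp_le_mul_exp_mul_add {ρ δ : ℝ} (hρ : 1 < ρ) (hδ : 0 < δ) (y : ℝ) :
    exp y ≤ δ * exp (ρ * y) + δ⁻¹ ^ (ρ - 1)⁻¹ := by
  rcases le_total (exp y) (δ⁻¹ ^ (ρ - 1)⁻¹) with hy | hy
  · have : 0 ≤ δ * exp (ρ * y) := by positivity
    linarith
  · have hlarge : δ⁻¹ ≤ exp ((ρ - 1) * y) := by
      rw [rpow_inv_le_iff_of_pos (by positivity) (by positivity) (by linarith)] at hy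
      rwa [mul_comm, exp_mul]
    calc exp y = δ * (δ⁻¹ * exp y) := by field_simp
      _ ≤ δ * (exp ((ρ - 1) * y) * exp y) := by gcongr
      _ = δ * exp (ρ * y) := by rw [← exp_add]; ring_nf
      _ ≤ δ * exp (ρ * y) + δ⁻¹ ^ (ρ - 1)⁻¹ := le_add_of_nonneg_right (by positivity)

variable [DecidableEq ι]

lemma card_compl_mul_exp_le_sum_exp_neg {y : ι → ℝ} {ρ D : ℝ} (hD : 0 ≤ D)
    (hy : ∑ i, y i = 0) (hS : ∀ i ∈ S, D ≤ y i) (hcard : ρ * #Sᶜ ≤ #S) :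
    #Sᶜ * exp (ρ * D) ≤ ∑ i, exp (-y i) := by
  have average : ρ * D * #Sᶜ ≤ ∑ i ∈ Sᶜ, -y i :=
    calc ρ * D * #Sᶜ = ρ * #Sᶜ * D := by ring
      _ ≤ #S * D := by gcongr
      _ = ∑ _i ∈ S, D := by rw [sum_const, nsmul_eq_mul]
      _ ≤ ∑ i ∈ S, y i := sum_le_sum hS
      _ = ∑ i ∈ Sᶜ, -y i := by
          rw [sum_neg_distrib]
          linarith [sum_add_sum_compl S y]
  exact (card_mul_exp_le_sum_exp average).trans
    (sum_le_sum_of_subset_of_nonneg (subset_univ _) fun _ _ _ => (exp_pos _).le)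

lemma exp_le_div_card_compl_mul_sum_exp_neg_add {y : ι → ℝ} {ρ δ D : ℝ} (hρ : 1 < ρ)
    (hδ : 0 < δ) (hSc : Sᶜ.Nonempty) (hy : ∑ i, y i = 0) (hS : ∀ i ∈ S, D ≤ y i)
    (hcard : ρ * #Sᶜ ≤ #S) :
    exp D ≤ δ / #Sᶜ * ∑ i, exp (-y i) + (1 + δ⁻¹ ^ (ρ - 1)⁻¹) := by
  have hpow : 0 ≤ δ⁻¹ ^ (ρ - 1)⁻¹ := by positivity
  rcases le_total D 0 with hD | hD
  · have : 0 ≤ δ / #Sᶜ * ∑ i, exp (-y i) := by positivity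
    linarith [exp_le_one_iff.2 hD]
  · have hne : (#Sᶜ : ℝ) ≠ 0 := by exact_mod_cast hSc.card_pos.ne'
    have : δ * exp (ρ * D) ≤ δ / #Sᶜ * ∑ i, exp (-y i) :=
      calc δ * exp (ρ * D) = δ / #Sᶜ * (#Sᶜ * exp (ρ * D)) := by
            rw [← mul_assoc, div_mul_cancel₀ _ hne]
        _ ≤ δ / #Sᶜ * ∑ i, exp (-y i) := by
            gcongr
            exact card_compl_mul_exp_le_sum_exp_neg hD hy hS hcard
    linarith [exp_le_mul_exp_mul_add hρ hδ D]

end FiniteSums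

section SmallExponent

variable {b : ℝ}

lemma exp_le_one_add_add_sq (hb : |b| ≤ 1 / 8) : exp b ≤ 1 + b + 3 / 5 * b ^ 2 := by
  have taylor : exp b ≤ 1 + b + b ^ 2 / 2 + |b| ^ 3 * (2 / 9) := by
    have h := (abs_le.1 (exp_bound (x := b) (by linarith) (n := 3) (by norm_num))).2
    norm_num [sum_range_succ, Nat.factorial] at h
    linarith
  have cube : |b| ^ 3 ≤ 1 / 8 * b ^ 2 :=
    calc |b| ^ 3 = |b| * b ^ 2 := by rw [← sq_abs b]; ring
      _ ≤ 1 / 8 * b ^ 2 := by gcongr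
  linarith [sq_nonneg b]

lemma exp_neg_mul_one_add_le (hb : |b| ≤ 1 / 8) {t : ℝ} (ht₀ : 0 ≤ t) (ht₁ : t ≤ 1) :
    exp (-(b * t)) * (1 + (1 - 2 * b) * (exp b - 1) * t) ≤ 1 - 11 / 10 * b ^ 2 * t := by
  obtain ⟨hb₁, hb₂⟩ := abs_le.1 hb
  have hbt : b * t ≤ 1 / 8 := by nlinarith
  have hrate : (1 - 2 * b) * (exp b - 1) ≤ b - 5 / 4 * b ^ 2 :=
    calc (1 - 2 * b) * (exp b - 1) ≤ (1 - 2 * b) * (b + 3 / 5 * b ^ 2) :=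
          mul_le_mul_of_nonneg_left (by linarith [exp_le_one_add_add_sq hb]) (by linarith)
      _ ≤ b - 5 / 4 * b ^ 2 := by nlinarith [sq_nonneg b]
  have hcontract : 0 ≤ 1 - 11 / 10 * b ^ 2 * t := by nlinarith [sq_nonneg b]
  calc exp (-(b * t)) * (1 + (1 - 2 * b) * (exp b - 1) * t)
      ≤ exp (-(b * t)) * (1 + (b - 5 / 4 * b ^ 2) * t) := by gcongr
    _ ≤ exp (-(b * t)) * ((1 - 11 / 10 * b ^ 2 * t) * (b * t + 1)) := by
        gcongr
        nlinarith [mul_nonneg (sq_nonneg b) ht₀]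
    _ ≤ exp (-(b * t)) * ((1 - 11 / 10 * b ^ 2 * t) * exp (b * t)) := by
        gcongr
        exact add_one_le_exp _
    _ = 1 - 11 / 10 * b ^ 2 * t := by
        rw [mul_left_comm, ← exp_add, neg_add_cancel, exp_zero, mul_one]

end SmallExponent

section Potential

variable {n f : ℕ} {β b : ℝ} {p s : Fin n → ℝ}

lemma PhiB_sortDesc (β : ℝ) (r : Fin n → ℝ) : PhiB n β (sortDesc r) = PhiB n β r :=
  Equiv.sum_comp (Fin.revPerm.trans (Tuple.sort r)) fun i => exp (β * r i)

lemma GammaB_eq_PhiB_add_PhiB_neg (α : ℝ) (s : Fin n → ℝ) :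
    GammaB n α s = PhiB n α s + PhiB n (-α) s :=
  rfl

lemma PhiB_nonneg (β : ℝ) (s : Fin n → ℝ) : 0 ≤ PhiB n β s :=
  sum_nonneg fun _ _ => (exp_pos _).le

lemma GammaB_nonneg (α : ℝ) (s : Fin n → ℝ) : 0 ≤ GammaB n α s :=
  add_nonneg (PhiB_nonneg α s) (PhiB_nonneg (-α) s)

lemma one_sub_mul_GammaB_le {ε γ : ℝ} (hε : 0 ≤ ε) (hγ : 0 ≤ γ) (α : ℝ) (s : Fin n → ℝ) :
    (1 - ε ^ 2 / (4 * n)) * GammaB n α s ≤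
      (1 - ε ^ 2 * (1 - 2 * γ) / (4 * n * (1 + ε * γ))) * GammaB n α s := by
  refine mul_le_mul_of_nonneg_right (sub_le_sub_left ?_ 1) (GammaB_nonneg α s)
  rw [mul_div_mul_comm]
  refine mul_le_of_le_one_right (by positivity) (div_le_one_of_le₀ ?_ (by positivity))
  linarith [mul_nonneg hε hγ]

lemma exp_mul_upd (β : ℝ) (s : Fin n → ℝ) (i j : Fin n) :
    exp (β * upd n f s j i) =
      exp (-(β * f) / n) * exp (β * s i) * (1 + if i = j then exp (β * f) - 1 else 0) := by
  unfold upd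
  split_ifs
  · rw [add_sub_cancel, ← exp_add, ← exp_add]
    ring_nf
  · rw [add_zero, mul_one, ← exp_add]
    ring_nf

lemma sum_mul_PhiB_upd (hp : ∑ j, p j = 1) :
    ∑ j, p j * PhiB n β (upd n f s j) =
      exp (-(β * f) / n) * ∑ i, (1 + p i * (exp (β * f) - 1)) * exp (β * s i) := by
  simp only [PhiB, mul_sum]
  rw [sum_comm]
  refine sum_congr rfl fun i _ => ?_
  calc ∑ j, p j * exp (β * upd n f s j i)
      = exp (-(β * f) / n) * exp (β * s i) *
          ∑ j, (p j + if i = j then p j * (exp (β * f) - 1) else 0) := by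
        rw [mul_sum]
        refine sum_congr rfl fun j _ => ?_
        rw [exp_mul_upd]
        split_ifs <;> ring
    _ = exp (-(β * f) / n) * ((1 + p i * (exp (β * f) - 1)) * exp (β * s i)) := by
        rw [sum_add_distrib, hp, sum_ite_eq, if_pos (mem_univ i)]
        ring

/-- The deviation of the allocation probabilities from `(1 - 2 b) / n`, multiplied by the relative
increase `exp b - 1` of the potential term of the bin that is hit. With `b = ± ε / 2` the reference
value is `(1 ∓ ε) / n`, so that one definition serves both `Φ` and `Ψ`. -/
noncomputable def excess (b : ℝ) (p : Fin n → ℝ) (i : Fin n) : ℝ :=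
  (exp b - 1) * (p i - (1 - 2 * b) / n)

lemma sum_mul_PhiB_upd_eq_add_sum_excess (hp : ∑ j, p j = 1) :
    ∑ j, p j * PhiB n β (upd n f s j) =
      exp (-(β * f) / n) * (1 + (1 - 2 * (β * f)) * (exp (β * f) - 1) / n) * PhiB n β s +
        exp (-(β * f) / n) * ∑ i, excess (β * f) p i * exp (β * s i) := by
  rw [sum_mul_PhiB_upd hp, PhiB, mul_assoc, ← mul_add]
  congr 1
  rw [mul_sum, ← sum_add_distrib]
  refine sum_congr rfl fun i _ => ?_
  rw [excess]
  ring

lemma antivary_excess (h : Antivary p s) :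
    Antivary (excess (β * f) p) fun i => β * s i := by
  have hsign : 0 ≤ (exp (β * f) - 1) * β := by
    rcases le_total 0 β with hβ | hβ
    · exact mul_nonneg (sub_nonneg.2 (one_le_exp (by positivity))) hβ
    · refine mul_nonneg_of_nonpos_of_nonpos (sub_nonpos.2 (exp_le_one_iff.2 ?_)) hβ
      exact mul_nonpos_of_nonpos_of_nonneg hβ f.cast_nonneg
  rw [antivary_iff_forall_mul_nonpos] at h ⊢
  intro i j
  calc (excess (β * f) p j - excess (β * f) p i) * (β * s j - β * s i)
      = (exp (β * f) - 1) * β * ((p j - p i) * (s j - s i)) := by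
        unfold excess
        ring
    _ ≤ 0 := mul_nonpos_of_nonneg_of_nonpos hsign (h i j)

lemma exp_mul_sum_abs_excess_le_one (hb : |b| ≤ 1 / 8) (hn : 0 < n) (hp₀ : ∀ i, 0 ≤ p i)
    (hp₁ : ∑ i, p i = 1) : exp (-b / n) * ∑ i, |excess b p i| ≤ 1 := by
  have hn' : (1 : ℝ) ≤ n := by exact_mod_cast hn
  obtain ⟨hb₁, hb₂⟩ := abs_le.1 hb
  have jump : |exp b - 1| ≤ 1 / 4 := by
    linarith [abs_exp_sub_one_le (x := b) (by linarith)]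
  have shift : exp (-b / n) ≤ 5 / 4 := by
    have hbn : |-b / n| ≤ 1 / 8 := by
      rw [abs_div, abs_neg, Nat.abs_cast]
      exact (div_le_self (abs_nonneg b) hn').trans hb
    linarith [abs_exp_sub_one_le (x := -b / n) (by linarith), le_abs_self (exp (-b / n) - 1)]
  have deviation : ∑ i, |p i - (1 - 2 * b) / n| ≤ 9 / 4 :=
    calc ∑ i, |p i - (1 - 2 * b) / n| ≤ ∑ i, (p i + (1 - 2 * b) / n) := by
          refine sum_le_sum fun i _ => (abs_sub _ _).trans_eq ?_
          rw [abs_of_nonneg (hp₀ i), abs_of_nonneg (div_nonneg (by linarith) (by positivity))]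
      _ = 1 + (1 - 2 * b) := by
          rw [sum_add_distrib, hp₁, sum_const, card_univ, Fintype.card_fin, nsmul_eq_mul]
          field_simp
      _ ≤ 9 / 4 := by linarith
  calc exp (-b / n) * ∑ i, |excess b p i|
      = exp (-b / n) * (|exp b - 1| * ∑ i, |p i - (1 - 2 * b) / n|) := by
        simp only [excess, abs_mul, mul_sum]
    _ ≤ 5 / 4 * (1 / 4 * (9 / 4)) := by gcongr
    _ ≤ 1 := by norm_num

lemma exp_sub_one_mul_nonpos {x : ℝ} (h : b * x ≤ 0) : (exp b - 1) * x ≤ 0 := by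
  rcases lt_trichotomy b 0 with hb | rfl | hb
  · exact mul_nonpos_of_nonpos_of_nonneg (sub_nonpos.2 (exp_le_one_iff.2 hb.le))
      (nonneg_of_mul_nonpos_right h hb)
  · simp
  · exact mul_nonpos_of_nonneg_of_nonpos (sub_nonneg.2 (one_le_exp hb.le))
      (nonpos_of_mul_nonpos_right h hb)

section Level

variable {γ : ℝ} {S : Finset (Fin n)}

lemma half_mul_le_card_compl (hn : 2 ≤ γ * n) (hcard : |#S - (1 - γ) * n| ≤ 1) :
    γ * n / 2 ≤ #Sᶜ := by
  rw [card_compl, Fintype.card_fin, Nat.cast_sub (card_finset_fin_le S)]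
  linarith [(abs_le.1 hcard).2]

lemma sum_excess_nonpos (hn : 2 ≤ γ * n) (hbn : 1 ≤ |b| * (γ * n))
    (hcard : |#S - (1 - γ) * n| ≤ 1) (hp : b * ∑ i ∈ S, p i ≤ b * (1 - γ - 2 * b)) :
    ∑ i ∈ S, excess b p i ≤ 0 := by
  have hsum : ∑ i ∈ S, excess b p i = (exp b - 1) * (∑ i ∈ S, p i - #S * ((1 - 2 * b) / n)) := by
    simp only [excess, ← mul_sum, sum_sub_distrib, sum_const, nsmul_eq_mul]
  have hn₀ : (0 : ℝ) < n := by
    refine Nat.cast_pos.2 (Nat.pos_of_ne_zero ?_)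
    rintro rfl
    norm_num at hn
  have rounding : b * ((1 - γ) * n - #S) ≤ |b| :=
    calc b * ((1 - γ) * n - #S) ≤ |b| * |#S - (1 - γ) * n| := by
          rw [abs_sub_comm, ← abs_mul]
          exact le_abs_self _
      _ ≤ |b| := mul_le_of_le_one_right (abs_nonneg b) hcard
  have bias : |b| ≤ 2 * b ^ 2 * (n - #S) :=
    calc |b| ≤ |b| * (|b| * (γ * n)) := le_mul_of_one_le_right (abs_nonneg b) hbn
      _ = b ^ 2 * (γ * n) := by rw [← sq_abs b]; ring
      _ ≤ b ^ 2 * (2 * (n - #S)) := by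
          refine mul_le_mul_of_nonneg_left ?_ (sq_nonneg b)
          linarith [(abs_le.1 hcard).2]
      _ = 2 * b ^ 2 * (n - #S) := by ring
  rw [hsum]
  refine exp_sub_one_mul_nonpos ?_
  calc b * (∑ i ∈ S, p i - #S * ((1 - 2 * b) / n))
      ≤ b * (1 - γ - 2 * b) - b * (#S * ((1 - 2 * b) / n)) := by linarith
    _ = (b * ((1 - γ) * n - #S) - 2 * b ^ 2 * (n - #S)) / n := by field_simp; ring
    _ ≤ 0 := div_nonpos_of_nonpos_of_nonneg (by linarith) hn₀.le

lemma sum_mul_PhiB_upd_le_add_exp {D : ℝ} (hb : |β * f| ≤ 1 / 8) (hn : 0 < n)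
    (hp₀ : ∀ i, 0 ≤ p i) (hp₁ : ∑ i, p i = 1) (hps : Antivary p s)
    (hS : ∑ i ∈ S, excess (β * f) p i ≤ 0) (hD : ∀ i ∉ S, β * s i ≤ D) :
    ∑ j, p j * PhiB n β (upd n f s j) ≤
      (1 - 11 / 10 * (β * f) ^ 2 / n) * PhiB n β s + exp D := by
  have hn₁ : (n : ℝ)⁻¹ ≤ 1 := inv_le_one_of_one_le₀ (by exact_mod_cast hn)
  have contraction := exp_neg_mul_one_add_le hb (by positivity) hn₁
  simp only [← div_eq_mul_inv, ← neg_div] at contraction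
  have correlation : exp (-(β * f) / n) * ∑ i, excess (β * f) p i * exp (β * s i) ≤ exp D :=
    calc exp (-(β * f) / n) * ∑ i, excess (β * f) p i * exp (β * s i)
        ≤ exp (-(β * f) / n) * ((∑ i, |excess (β * f) p i|) * exp D) := by
          gcongr
          exact sum_mul_exp_le_sum_abs_mul_exp (antivary_excess hps) hS hD
      _ = exp (-(β * f) / n) * (∑ i, |excess (β * f) p i|) * exp D := (mul_assoc ..).symm
      _ ≤ exp D :=
          mul_le_of_le_one_left (exp_pos D).le (exp_mul_sum_abs_excess_le_one hb hn hp₀ hp₁)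
  rw [sum_mul_PhiB_upd_eq_add_sum_excess hp₁]
  exact add_le_add (mul_le_mul_of_nonneg_right contraction (PhiB_nonneg β s)) correlation

lemma exp_le_div_mul_PhiB_neg_add {δ D : ℝ} (hγ₀ : 0 < γ) (hγ₁ : γ < 1 / 2) (hδ : 0 < δ)
    (hn : 2 ≤ γ * (1 - 2 * γ) * n) (hcard : |#S - (1 - γ) * n| ≤ 1) (hs : ∑ i, s i = 0)
    (hD : ∀ i ∈ S, D ≤ β * s i) :
    exp D ≤ 2 * δ / (γ * n) * PhiB n (-β) s + (1 + δ⁻¹ ^ (2 * γ / (1 - 2 * γ))) := by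
  have hγn : 2 ≤ γ * n := by
    have : 0 ≤ 2 * γ * (γ * n) := by positivity
    linarith
  have hSc := half_mul_le_card_compl hγn hcard
  have hSc₀ : (0 : ℝ) < #Sᶜ := by linarith
  have hratio : 1 / (2 * γ) * #Sᶜ ≤ #S := by
    rw [div_mul_eq_mul_div, one_mul, div_le_iff₀ (by positivity), card_compl, Fintype.card_fin,
      Nat.cast_sub (card_finset_fin_le S)]
    nlinarith [(abs_le.1 hcard).1]
  have hexponent : (1 / (2 * γ) - 1)⁻¹ = 2 * γ / (1 - 2 * γ) := by
    rw [div_sub_one (by positivity), inv_div]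
  have hlevel := exp_le_div_card_compl_mul_sum_exp_neg_add (y := fun i => β * s i)
    (one_lt_one_div (by positivity) (by linarith)) hδ
    (card_pos.1 (Nat.cast_pos.1 hSc₀)) (by rw [← mul_sum, hs, mul_zero]) hD hratio
  rw [hexponent] at hlevel
  have hcoeff : δ / #Sᶜ ≤ 2 * δ / (γ * n) :=
    calc δ / #Sᶜ ≤ δ / (γ * n / 2) := by gcongr
      _ = 2 * δ / (γ * n) := by field_simp
  refine hlevel.trans (add_le_add_left ?_ _)
  simpa only [PhiB, neg_mul] using mul_le_mul_of_nonneg_right hcoeff (PhiB_nonneg (-β) s)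

theorem sum_mul_PhiB_upd_le (hb : |β * f| ≤ 1 / 8) (hγ₀ : 0 < γ) (hγ₁ : γ < 1 / 2)
    (hn : 1 ≤ |β * f| * (γ * (1 - 2 * γ) * n)) (hp₀ : ∀ i, 0 ≤ p i) (hp₁ : ∑ i, p i = 1)
    (hps : Antivary p s) (hs : ∑ i, s i = 0) (hcard : |#S - (1 - γ) * n| ≤ 1)
    (hpS : β * f * ∑ i ∈ S, p i ≤ β * f * (1 - γ - 2 * (β * f)))
    (hS : ∀ i ∈ S, ∀ j ∉ S, β * s j ≤ β * s i) :
    ∑ j, p j * PhiB n β (upd n f s j) ≤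
      (1 - 11 / 10 * (β * f) ^ 2 / n) * PhiB n β s + (β * f) ^ 2 / 10 / n * PhiB n (-β) s +
        (1 + (20 / (γ * (β * f) ^ 2)) ^ (2 * γ / (1 - 2 * γ))) := by
  have hX : 0 ≤ γ * (1 - 2 * γ) * n :=
    mul_nonneg (mul_nonneg hγ₀.le (by linarith)) n.cast_nonneg
  have hX₂ : 2 ≤ γ * (1 - 2 * γ) * n := by
    linarith [mul_le_mul_of_nonneg_right hb hX]
  have hXγ : γ * (1 - 2 * γ) * n ≤ γ * n := by
    gcongr
    exact mul_le_of_le_one_right hγ₀.le (by linarith)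
  have hγn : 2 ≤ γ * n := hX₂.trans hXγ
  have hn₀ : (0 : ℝ) < n := pos_of_mul_pos_right (two_pos.trans_le hγn) hγ₀.le
  have hb₀ : β * f ≠ 0 := by
    intro h
    norm_num [h] at hn
  have hδ : 0 < γ * (β * f) ^ 2 / 20 := by positivity
  have hSc : Sᶜ.Nonempty :=
    card_pos.1 (Nat.cast_pos.1 (by linarith [half_mul_le_card_compl hγn hcard] : (0 : ℝ) < #Sᶜ))
  obtain ⟨j, hj, hmax⟩ := exists_max_image Sᶜ (fun i => β * s i) hSc
  have hexcess : ∑ i ∈ S, excess (β * f) p i ≤ 0 :=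
    sum_excess_nonpos hγn (hn.trans (by gcongr)) hcard hpS
  have hdrift := sum_mul_PhiB_upd_le_add_exp hb (Nat.cast_pos.1 hn₀) hp₀ hp₁ hps hexcess
    fun i hi => hmax i (mem_compl.2 hi)
  have hlevel := exp_le_div_mul_PhiB_neg_add hγ₀ hγ₁ hδ hX₂ hcard hs
    fun i hi => hS i hi j (mem_compl.1 hj)
  have hcoeff : 2 * (γ * (β * f) ^ 2 / 20) / (γ * n) = (β * f) ^ 2 / 10 / n := by
    field_simp
    ring
  rw [inv_div, hcoeff] at hlevel
  linarith

lemma sum_mul_PhiB_upd_le_of_sum_Iio_le {k : Fin n} (hβ : 0 ≤ β) (hb : β * f ≤ 1 / 8)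
    (hγ₀ : 0 < γ) (hγ₁ : γ < 1 / 2) (hn : 1 ≤ β * f * (γ * (1 - 2 * γ) * n))
    (hp₀ : ∀ i, 0 ≤ p i) (hp : Monotone p) (hp₁ : ∑ i, p i = 1) (hs : Antitone s)
    (hs₀ : ∑ i, s i = 0) (hk : |k - (1 - γ) * n| ≤ 1)
    (hlow : ∑ i ∈ Iio k, p i ≤ 1 - γ - 2 * (β * f)) :
    ∑ j, p j * PhiB n β (upd n f s j) ≤
      (1 - 11 / 10 * (β * f) ^ 2 / n) * PhiB n β s + (β * f) ^ 2 / 10 / n * PhiB n (-β) s +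
        (1 + (20 / (γ * (β * f) ^ 2)) ^ (2 * γ / (1 - 2 * γ))) := by
  have habs : |β * f| = β * f := abs_of_nonneg (by positivity)
  refine sum_mul_PhiB_upd_le (S := Iio k) (by rwa [habs]) hγ₀ hγ₁ (by rwa [habs]) hp₀ hp₁
    (hp.antivary hs) hs₀ (by rwa [Fin.card_Iio]) (by gcongr) fun i hi j hj => ?_
  gcongr
  exact hs ((mem_Iio.1 hi).le.trans (not_lt.1 (mt mem_Iio.2 hj)))

lemma sum_mul_PhiB_neg_upd_le_of_le_sum_Ici {l : Fin n} (hβ : 0 ≤ β) (hb : β * f ≤ 1 / 8)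
    (hγ₀ : 0 < γ) (hγ₁ : γ < 1 / 2) (hn : 1 ≤ β * f * (γ * (1 - 2 * γ) * n))
    (hp₀ : ∀ i, 0 ≤ p i) (hp : Monotone p) (hp₁ : ∑ i, p i = 1) (hs : Antitone s)
    (hs₀ : ∑ i, s i = 0) (hl : |l - γ * n| ≤ 1)
    (hhigh : 1 - γ + 2 * (β * f) ≤ ∑ i ∈ Ici l, p i) :
    ∑ j, p j * PhiB n (-β) (upd n f s j) ≤
      (1 - 11 / 10 * (β * f) ^ 2 / n) * PhiB n (-β) s + (β * f) ^ 2 / 10 / n * PhiB n β s +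
        (1 + (20 / (γ * (β * f) ^ 2)) ^ (2 * γ / (1 - 2 * γ))) := by
  have hβf : 0 ≤ β * f := by positivity
  have habs : |-β * f| = β * f := by rw [neg_mul, abs_neg, abs_of_nonneg hβf]
  have hcard : |#(Ici l) - (1 - γ) * n| ≤ 1 := by
    rw [Fin.card_Ici, Nat.cast_sub l.is_lt.le, abs_sub_comm]
    convert hl using 2
    ring
  have hdrift := sum_mul_PhiB_upd_le (β := -β) (S := Ici l) (by rwa [habs]) hγ₀ hγ₁
    (by rwa [habs]) hp₀ hp₁ (hp.antivary hs) hs₀ hcard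
    (by linarith [mul_le_mul_of_nonneg_left hhigh hβf]) fun i hi j hj => by
      rw [neg_mul, neg_mul, neg_le_neg_iff]
      gcongr
      exact hs ((not_le.1 (mt mem_Ici.2 hj)).le.trans (mem_Ici.1 hi))
  simpa only [neg_mul, neg_sq, neg_neg] using hdrift

end Level

lemma exists_fin_add_one_eq_ceil {γ : ℝ} (hγ₀ : 0 < γ) (hγ₁ : γ < 1) (hn : 0 < n) :
    ∃ k : Fin n, k.1 + 1 = ⌈γ * n⌉₊ ∧ |(k.1 : ℝ) - γ * n| ≤ 1 := by
  have hpos : 0 < ⌈γ * n⌉₊ := Nat.ceil_pos.2 (by positivity)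
  have hle : ⌈γ * n⌉₊ ≤ n := Nat.ceil_le.2 (mul_le_of_le_one_left n.cast_nonneg hγ₁.le)
  refine ⟨⟨⌈γ * n⌉₊ - 1, by lia⟩, Nat.sub_add_cancel hpos, ?_⟩
  have hlow : γ * n ≤ ⌈γ * n⌉₊ := Nat.le_ceil _
  have hhigh : (⌈γ * n⌉₊ : ℝ) < γ * n + 1 := Nat.ceil_lt_add_one (by positivity)
  rw [Nat.cast_pred hpos, abs_le]
  constructor <;> linarith

lemma filter_add_one_lt_eq_Iio {k : Fin n} {m : ℕ} (h : k.1 + 1 = m) :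
    ({i | i.1 + 1 < m} : Finset (Fin n)) = Iio k := by
  ext i
  simp only [mem_filter, mem_univ, true_and, mem_Iio, Fin.lt_def]
  lia

lemma filter_le_add_one_eq_Ici {k : Fin n} {m : ℕ} (h : k.1 + 1 = m) :
    ({i | m ≤ i.1 + 1} : Finset (Fin n)) = Ici k := by
  ext i
  simp only [mem_filter, mem_univ, true_and, mem_Ici, Fin.le_def]
  lia

end Potential

theorem stmt18_general {f n : ℕ} (hf : 0 < f) {ε γ₁ γ₂ α : ℝ} (hε₀ : 0 < ε) (hε₁ : ε ≤ 1 / 4)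
    (hγ₀ : 0 < γ₁) (hγ₁ : γ₁ < 1 / 2) (h12 : γ₁ + γ₂ = 1) (hα : α = ε / (2 * f))
    (hn : 2 / (ε * γ₁ * (1 - 2 * γ₁)) ≤ n) {p s : Fin n → ℝ} (hp₀ : ∀ i, 0 ≤ p i)
    (hp : Monotone p) (hp₁ : ∑ i, p i = 1)
    (hlow : ∑ i with i.1 + 1 < ⌈γ₂ * (n : ℝ)⌉₊, p i ≤ γ₂ - ε)
    (hhigh : γ₂ + ε ≤ ∑ i with ⌈γ₁ * (n : ℝ)⌉₊ ≤ i.1 + 1, p i)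
    (hs : Antitone s) (hs₀ : ∑ i, s i = 0) :
    ∑ j, p j * GammaB n α (sortDesc (upd n f s j)) ≤
      (1 - ε ^ 2 / (4 * n)) * GammaB n α s +
        2 * (1 + (80 / (γ₁ * ε ^ 2)) ^ (2 * γ₁ / (1 - 2 * γ₁))) := by
  obtain rfl : γ₂ = 1 - γ₁ := by linarith
  have hαf : α * f = ε / 2 := by
    rw [hα]
    field_simp
  have hα₀ : 0 < α := by
    rw [hα]
    positivity
  have hb : α * f ≤ 1 / 8 := by linarith
  have hlarge : 1 ≤ α * f * (γ₁ * (1 - 2 * γ₁) * n) := by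
    rw [div_le_iff₀ (mul_pos (by positivity) (by linarith))] at hn
    rw [hαf]
    linarith
  have hn₀ : 0 < n := by
    refine Nat.pos_of_ne_zero ?_
    rintro rfl
    norm_num at hlarge
  obtain ⟨k, hk, hkn⟩ := exists_fin_add_one_eq_ceil (γ := 1 - γ₁) (by linarith) (by linarith) hn₀
  obtain ⟨l, hl, hln⟩ := exists_fin_add_one_eq_ceil hγ₀ (by linarith) hn₀
  rw [filter_add_one_lt_eq_Iio hk] at hlow
  rw [filter_le_add_one_eq_Ici hl] at hhigh
  have hΦ := sum_mul_PhiB_upd_le_of_sum_Iio_le hα₀.le hb hγ₀ hγ₁ hlarge hp₀ hp hp₁ hs hs₀ hkn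
    (by linarith)
  have hΨ := sum_mul_PhiB_neg_upd_le_of_le_sum_Ici hα₀.le hb hγ₀ hγ₁ hlarge hp₀ hp hp₁ hs hs₀ hln
    (by linarith)
  have hconst : 20 / (γ₁ * (ε / 2) ^ 2) = 80 / (γ₁ * ε ^ 2) := by
    field_simp
    norm_num
  rw [hαf, hconst] at hΦ hΨ
  simp only [GammaB_eq_PhiB_add_PhiB_neg, PhiB_sortDesc, mul_add, sum_add_distrib]
  refine (add_le_add hΦ hΨ).trans_eq ?_
  ring

/-- Theorem `thm-super-mart-beta`: supermartingale inequality for Γ in the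
(1+β)-choice-type multidimensional process. -/
theorem stmt18 (f : ℕ) (hf : 0 < f) (ε θ γ₁ γ₂ γ₃ γ₄ : ℝ)
    (hε0 : 0 < ε) (hε1 : ε ≤ 1 / 4) (hθ : 1 < θ)
    (hγ₁ : 0 < γ₁) (h13 : γ₁ < γ₃) (h3 : γ₃ < 1 / 2) (h4 : (1 : ℝ) / 2 < γ₄)
    (h42 : γ₄ < γ₂) (h2 : γ₂ < 1) (hθγ : θ * γ₁ = 1) (h12 : γ₁ + γ₂ = 1)
    (h34 : γ₃ + γ₄ = 1) (α : ℝ) (hα : α = ε / (2 * f)) :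
    ∃ c : ℝ, 0 < c ∧ ∃ N : ℕ, ∀ n : ℕ, N ≤ n →
      ∀ p s : Fin n → ℝ,
        (∀ i, 0 ≤ p i) → Monotone p → (∑ i, p i = 1) →
        (∀ k : Fin n, k.1 + 1 = ⌈γ₃ * (n : ℝ)⌉₊ → p k ≤ (1 - θ * ε) / n) →
        (∀ k : Fin n, k.1 + 1 = ⌈γ₄ * (n : ℝ)⌉₊ → (1 + θ * ε) / n ≤ p k) →
        (∑ i ∈ Finset.univ.filter (fun i : Fin n => i.1 + 1 < ⌈γ₂ * (n : ℝ)⌉₊),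
            p i ≤ γ₂ - ε) →
        (γ₂ + ε ≤
          ∑ i ∈ Finset.univ.filter (fun i : Fin n => ⌈γ₁ * (n : ℝ)⌉₊ ≤ i.1 + 1),
            p i) →
        (∀ i j : Fin n, i ≤ j → s j ≤ s i) → (∑ i, s i = 0) →
        ∑ j : Fin n, p j * GammaB n α (sortDesc (upd n f s j)) ≤
          (1 - ε ^ 2 * (1 - 2 * γ₁) / (4 * n * (1 + ε * γ₁))) * GammaB n α s +
            c := by
  refine ⟨2 * (1 + (80 / (γ₁ * ε ^ 2)) ^ (2 * γ₁ / (1 - 2 * γ₁))), by positivity,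
    ⌈2 / (ε * γ₁ * (1 - 2 * γ₁))⌉₊, fun n hn p s hp₀ hp hp₁ _ _ hlow hhigh hs hs₀ => ?_⟩
  exact (stmt18_general hf hε0 hε1 hγ₁ (h13.trans h3) h12 hα (Nat.ceil_le.1 hn) hp₀ hp hp₁ hlow
    hhigh (fun i j => hs i j) hs₀).trans
      (add_le_add_left (one_sub_mul_GammaB_le hε0.le hγ₁.le α s) _)
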